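/- Let f be an almost permutation of ℕ. Then α_f satisfies property (*) if and only if Index(f) is even. -/

import Mathlib

open Set Filter


/-- An almost permutation of `ℕ`: a bijection between a cofinite subset `dom`
of `ℕ` and a cofinite subset (its range) of `ℕ`.  The function `toFun` carries
arbitrary (junk) values outside of `dom`. -/
structure AlmostPerm where
  dom : Set ℕ
  toFun : ℕ → ℕ
  cofinite_dom : domᶜ.Finite
  injOn : Set.InjOn toFun dom
  cofinite_ran : (toFun '' dom)ᶜ.Finite

namespace AlmostPerm

/-- The range of an almost permutation. -/
def ran (f : AlmostPerm) : Set ℕ := f.toFun '' f.dom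

/-- The image `f[A]` of a set under an almost permutation. -/
def image (f : AlmostPerm) (A : Set ℕ) : Set ℕ := f.toFun '' (A ∩ f.dom)

/-- The (prodigal) index `|ℕ \ dom f| − |ℕ \ ran f|`. -/
noncomputable def index (f : AlmostPerm) : ℤ :=
  (Nat.card ↥(f.domᶜ) : ℤ) - (Nat.card ↥(f.ranᶜ) : ℤ)

/-- The one-step relation: `b = f(a)`. -/
def step (f : AlmostPerm) (a b : ℕ) : Prop := a ∈ f.dom ∧ f.toFun a = b

/-- The orbit `O_f(n) = {f^k(n) : k ∈ ℤ, f^k(n) defined}`. -/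
def orbit (f : AlmostPerm) (n : ℕ) : Set ℕ :=
  {m | Relation.ReflTransGen f.step n m ∨ Relation.ReflTransGen f.step m n}

end AlmostPerm


/-- The Boolean algebra `P(ℕ)/Fin`, realized as germs of `ℕ → Prop` over the
cofinite filter on `ℕ`. -/
abbrev PFin : Type := Filter.Germ (Filter.cofinite : Filter ℕ) Prop

/-- The class `[A]` of a set `A ⊆ ℕ` in `P(ℕ)/Fin`. -/
def pfinMk (A : Set ℕ) : PFin := Filter.Germ.ofFun (fun n => n ∈ A)


/-- `c` is a component of the automorphism `α` of `P(ℕ)/Fin`: an atom of the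
subalgebra of fixed points of `α`. -/
def IsComponent (α : PFin → PFin) (c : PFin) : Prop :=
  α c = c ∧ c ≠ ⊥ ∧ ∀ x : PFin, ⊥ < x → x < c → α x ≠ x


/-- Property (*) of an automorphism `α` of `P(ℕ)/Fin`: there is a partition
`P` of the set of components of `α` into pairs such that for every set `A` of
pairs there is an `α`-fixed `d` lying above all components appearing in `A`
and disjoint from all other components. -/
def PropertyStar (α : PFin → PFin) : Prop :=
  ∃ P : Set (PFin × PFin),
    (∀ p ∈ P, IsComponent α p.1 ∧ IsComponent α p.2 ∧ p.1 ≠ p.2) ∧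
    (∀ c : PFin, IsComponent α c → ∃ p ∈ P, c = p.1 ∨ c = p.2) ∧
    (∀ p ∈ P, ∀ q ∈ P, p ≠ q → p.1 ≠ q.1 ∧ p.1 ≠ q.2 ∧ p.2 ≠ q.1 ∧ p.2 ≠ q.2) ∧
    ∀ A ⊆ P, ∃ d : PFin,
      (∀ p ∈ A, p.1 ≤ d ∧ p.2 ≤ d) ∧
      (∀ c : PFin, IsComponent α c → (∀ p ∈ A, c ≠ p.1 ∧ c ≠ p.2) → c ⊓ d = ⊥) ∧
      α d = d

/-!
An almost permutation `f`, or its inverse, extends to an injection `h : ℕ → ℕ`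
missing exactly `|Index f|` points. The infinite orbits of `h` are two-sided, each with two ends, or
start at a missed point and have a single end. The ends are the components of `α_f`, and a fixed
element of `α_f` is a set that only finitely many of the steps `x ↦ h x` enter or leave.

Let `τ` send an end to the opposite end of its orbit, so that `τ` has `|Index f|` fixed points, and
let `σ` be the fixed-point-free involution given by a partition of the ends into pairs. A fixed
element cuts only finitely many two-sided orbits, so property (*) forces `σ` and `τ` to agree off a
finite set, and then the number of fixed points of `τ` is even. If it is even, pairing opposite ends
and, arbitrarily, the ends of the one-sided orbits gives property (*).
-/

/-! ### Involutions that agree up to finitely many points -/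

section Involutions

open Function

variable {E : Type*} {σ τ : E → E}

theorem even_ncard_of_involutive (hσ : Involutive σ) {K : Set E} (hK : K.Finite)
    (hmaps : MapsTo σ K K) (hne : ∀ e ∈ K, σ e ≠ e) : Even K.ncard := by
  have hsum : ∑ _e ∈ hK.toFinset, (1 : ZMod 2) = 0 :=
    Finset.sum_involution (fun e _ ↦ σ e) (fun _ _ ↦ by decide)
      (fun e he _ ↦ hne e (hK.mem_toFinset.1 he))
      (fun e he ↦ hK.mem_toFinset.2 (hmaps (hK.mem_toFinset.1 he))) (fun e _ ↦ hσ e)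
  rwa [Finset.sum_const, nsmul_one, ZMod.natCast_eq_zero_iff_even,
    ← ncard_eq_toFinset_card K hK] at hsum

theorem even_ncard_fixedPoints (hσ : Involutive σ) (hτ : Involutive τ) (hne : ∀ e, σ e ≠ e)
    (hfin : {e | σ e ≠ τ e}.Finite) : Even (fixedPoints τ).ncard := by
  -- `σ` acts freely on `K`, and `τ` acts freely on `K` minus its own fixed points.
  set K := {e | σ e ≠ τ e}
  have hfixed : fixedPoints τ ⊆ K := fun e he h ↦ hne e (h.trans he)
  have hσK : MapsTo σ K K := fun e he h ↦ he (by rw [← hτ (σ e), ← h, hσ])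
  have hτK : MapsTo τ (K \ fixedPoints τ) (K \ fixedPoints τ) := fun e he ↦
    ⟨fun h ↦ he.1 (by rw [← hσ (τ e), h, hτ]), fun h ↦ he.2 (hτ.injective h)⟩
  have hK : Even K.ncard := even_ncard_of_involutive hσ hfin hσK fun e _ ↦ hne e
  have hmoved : Even (K \ fixedPoints τ).ncard :=
    even_ncard_of_involutive hτ hfin.sdiff hτK fun e he ↦ he.2
  rw [← ncard_sdiff_add_ncard_of_subset hfixed hfin, Nat.even_add] at hK
  exact hK.1 hmoved

theorem finite_ne_of_finite_cut (hσ : Involutive σ) (hτ : Involutive τ)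
    (hfix : (fixedPoints τ).Finite)
    (hcut : ∀ A : Set E, MapsTo σ A A → {e ∈ A | τ e ∉ A}.Finite) :
    {e | σ e ≠ τ e}.Finite := by
  -- If `σ` and `τ` differ infinitely often, choose points `g 0, g 1, …` so sparsely that the set
  -- `{g i, σ (g i) | i}` contains no `τ (g i)`.
  by_contra hinf
  let r (a b : E) : Prop := a ≠ b ∧ τ a ≠ b ∧ τ a ≠ σ b ∧ τ b ≠ σ a
  have : Std.Symm r := ⟨fun a b h ↦ ⟨h.1.symm, fun hb ↦ h.2.1 (by rw [← hb, hτ]), h.2.2.2, h.2.2.1⟩⟩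
  have hr (a : E) : {b | ¬ r a b}.Finite := by
    refine (toFinite {a, τ a, σ (τ a), τ (σ a)}).subset fun b hb ↦ ?_
    by_contra hb'
    simp only [mem_insert_iff, mem_singleton_iff, not_or] at hb'
    exact hb ⟨hb'.1 ∘ Eq.symm, hb'.2.1 ∘ Eq.symm, fun h ↦ hb'.2.2.1 (by rw [h, hσ]),
      fun h ↦ hb'.2.2.2 (by rw [← h, hτ])⟩
  obtain ⟨g, hg, hpair⟩ := exists_seq_of_forall_finset_exists'
      (fun e ↦ e ∈ {e | σ e ≠ τ e} \ fixedPoints τ) r fun s _ ↦ by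
    have hbad : (⋃ a ∈ s, {b | ¬ r a b}).Finite := s.finite_toSet.biUnion fun a _ ↦ hr a
    obtain ⟨b, hb, hb'⟩ := ((Set.Infinite.sdiff hinf hfix).sdiff hbad).nonempty
    exact ⟨b, hb, fun a ha ↦ by_contra fun h ↦ hb' (mem_biUnion (Finset.mem_coe.2 ha) h)⟩
  have hg_inj : Injective g := fun i j hij ↦ by_contra fun hne ↦ (hpair hne).1 hij
  have hA : MapsTo σ (range g ∪ range (σ ∘ g)) (range g ∪ range (σ ∘ g)) := by
    rintro _ (⟨i, rfl⟩ | ⟨i, rfl⟩)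
    · exact Or.inr ⟨i, rfl⟩
    · exact Or.inl ⟨i, (hσ _).symm⟩
  refine infinite_range_of_injective hg_inj ((hcut _ hA).subset ?_)
  rintro _ ⟨i, rfl⟩
  refine ⟨Or.inl ⟨i, rfl⟩, ?_⟩
  rintro (⟨j, hj⟩ | ⟨j, hj⟩) <;> obtain rfl | hij := eq_or_ne i j
  · exact (hg i).2 hj.symm
  · exact (hpair hij).2.1 hj.symm
  · exact (hg i).1 hj
  · exact (hpair hij).2.2.1 hj.symm

theorem exists_involutive_of_even_card {X : Type*} [Finite X] (hX : Even (Nat.card X)) :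
    ∃ s : X → X, Involutive s ∧ ∀ x, s x ≠ x := by
  let e := Finite.equivFin X
  refine ⟨fun x ↦ e.symm (e x).rev, fun x ↦ by simp, fun x hx ↦ ?_⟩
  have hval : (e x).rev.val = (e x).val := congrArg Fin.val (e.symm_apply_eq.1 hx)
  rw [Fin.val_rev] at hval
  have := (e x).isLt
  obtain ⟨m, hm⟩ := hX
  lia

end Involutions

section Pairings

open Function

variable {β E : Type*} {c : E → β}

/-- `P` is a partition of `S` into unordered pairs, each pair `{x, y}` being represented by exactly
one of the ordered pairs `(x, y)` and `(y, x)`; this is the notion that `PropertyStar` uses. -/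
structure IsPairing (P : Set (β × β)) (S : Set β) : Prop where
  mem_and_ne : ∀ p ∈ P, p.1 ∈ S ∧ p.2 ∈ S ∧ p.1 ≠ p.2
  cover : ∀ x ∈ S, ∃ p ∈ P, x = p.1 ∨ x = p.2
  disjoint : ∀ p ∈ P, ∀ q ∈ P, p ≠ q → p.1 ≠ q.1 ∧ p.1 ≠ q.2 ∧ p.2 ≠ q.1 ∧ p.2 ≠ q.2

theorem IsPairing.partner_unique {P : Set (β × β)} {S : Set β} (hP : IsPairing P S) {x y z : β}
    (hy : (x, y) ∈ P ∨ (y, x) ∈ P) (hz : (x, z) ∈ P ∨ (z, x) ∈ P) : y = z := by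
  have heq {p q : β × β} (hp : p ∈ P) (hq : q ∈ P)
      (h : p.1 = q.1 ∨ p.1 = q.2 ∨ p.2 = q.1 ∨ p.2 = q.2) : p = q := by
    by_contra hne
    have := hP.disjoint p hp q hq hne
    tauto
  rcases hy with hy | hy <;> rcases hz with hz | hz
  · exact congrArg Prod.snd (heq hy hz (by simp))
  · have h := heq hy hz (by simp)
    exact (congrArg Prod.snd h).trans (congrArg Prod.fst h)
  · have h := heq hy hz (by simp)
    exact (congrArg Prod.fst h).trans (congrArg Prod.snd h)
  · exact congrArg Prod.fst (heq hy hz (by simp))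

theorem IsPairing.exists_involutive (hc : Injective c) {P : Set (β × β)}
    (hP : IsPairing P (range c)) :
    ∃ σ : E → E, Involutive σ ∧ (∀ e, σ e ≠ e) ∧
      ∀ e e', (c e, c e') ∈ P ∨ (c e', c e) ∈ P ↔ σ e = e' := by
  have hex (e : E) : ∃ e', (c e, c e') ∈ P ∨ (c e', c e) ∈ P := by
    obtain ⟨⟨x, y⟩, hp, hxy⟩ := hP.cover (c e) ⟨e, rfl⟩
    obtain ⟨⟨a, rfl⟩, ⟨b, rfl⟩, -⟩ := hP.mem_and_ne _ hp
    rcases hxy with h | h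
    · exact ⟨b, Or.inl (h ▸ hp)⟩
    · exact ⟨a, Or.inr (h ▸ hp)⟩
  choose σ hσ using hex
  refine ⟨σ, fun e ↦ hc (hP.partner_unique (hσ (σ e)) (hσ e).symm), fun e he ↦ ?_, fun e e' ↦
    ⟨fun h ↦ hc (hP.partner_unique (hσ e) h), fun h ↦ h ▸ hσ e⟩⟩
  have hself : (c e, c e) ∈ P := by simpa only [he, or_self] using hσ e
  exact (hP.mem_and_ne _ hself).2.2 rfl

theorem exists_isPairing_of_involutive (hc : Injective c) {σ : E → E} (hσ : Involutive σ)
    (hne : ∀ e, σ e ≠ e) :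
    ∃ P : Set (β × β), IsPairing P (range c) ∧ ∀ p ∈ P, ∃ e, p = (c e, c (σ e)) := by
  obtain ⟨_, -⟩ := exists_wellFoundedLT E
  refine ⟨{p | ∃ e, e < σ e ∧ p = (c e, c (σ e))}, ⟨?_, ?_, ?_⟩, fun p ⟨e, _, hp⟩ ↦ ⟨e, hp⟩⟩
  · rintro _ ⟨e, -, rfl⟩
    exact ⟨⟨e, rfl⟩, ⟨σ e, rfl⟩, fun h ↦ hne e (hc h).symm⟩
  · rintro _ ⟨e, rfl⟩
    rcases lt_or_gt_of_ne (hne e) with hlt | hlt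
    · exact ⟨_, ⟨σ e, by rwa [hσ], rfl⟩, Or.inr (by rw [hσ])⟩
    · exact ⟨_, ⟨e, hlt, rfl⟩, Or.inl rfl⟩
  · rintro _ ⟨e, he, rfl⟩ _ ⟨e', he', rfl⟩ hpair
    have hee' : e ≠ e' := by rintro rfl; exact hpair rfl
    have hcross : e ≠ σ e' := fun h ↦ lt_asymm he' (by rwa [h, hσ] at he)
    exact ⟨hc.ne hee', hc.ne hcross, hc.ne fun h ↦ hcross (by rw [← h, hσ]),
      hc.ne (hσ.injective.ne hee')⟩

/-- Some fixed element of `α` lies above every `c e` with `e ∈ A` and is disjoint from every other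
`c e`: the condition on `d_A` in property (*), for a family `c` that enumerates the components. -/
def IsSeparated (α : PFin → PFin) (c : E → PFin) (A : Set E) : Prop :=
  ∃ d : PFin, (∀ e ∈ A, c e ≤ d) ∧ (∀ e ∉ A, c e ⊓ d = ⊥) ∧ α d = d

theorem propertyStar_iff_exists_involutive {α : PFin → PFin} {c : E → PFin} (hc : Injective c)
    (hcomp : {x | IsComponent α x} = range c) :
    PropertyStar α ↔ ∃ σ : E → E, Involutive σ ∧ (∀ e, σ e ≠ e) ∧
      ∀ A : Set E, MapsTo σ A A → IsSeparated α c A := by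
  have hcomp' (x : PFin) : IsComponent α x ↔ x ∈ range c := by rw [← hcomp]; rfl
  constructor
  · rintro ⟨P, hmem, hcover, hdisj, hsep⟩
    have hP : IsPairing P (range c) := hcomp ▸ ⟨hmem, hcover, hdisj⟩
    obtain ⟨σ, hσ, hne, hpartner⟩ := hP.exists_involutive hc
    refine ⟨σ, hσ, hne, fun A hA ↦ ?_⟩
    obtain ⟨d, hle, hbot, hd⟩ := hsep {p ∈ P | p.1 ∈ c '' A} (sep_subset _ _)
    refine ⟨d, fun e he ↦ ?_, fun e he ↦ hbot _ ((hcomp' _).2 ⟨e, rfl⟩) ?_, hd⟩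
    · rcases (hpartner e (σ e)).2 rfl with hp | hp
      · exact (hle _ ⟨hp, e, he, rfl⟩).1
      · exact (hle _ ⟨hp, σ e, hA he, rfl⟩).2
    · rintro ⟨_, y⟩ ⟨hp, a, ha, rfl⟩
      refine ⟨fun h ↦ he (hc h ▸ ha), ?_⟩
      rintro rfl
      exact he ((hpartner a e).1 (Or.inl hp) ▸ hA ha)
  · rintro ⟨σ, hσ, hne, hsep⟩
    obtain ⟨P, hP, hform⟩ := exists_isPairing_of_involutive hc hσ hne
    obtain ⟨hmem, hcover, hdisj⟩ := hcomp ▸ hP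
    refine ⟨P, hmem, hcover, hdisj, fun A hAP ↦ ?_⟩
    obtain ⟨d, hle, hbot, hd⟩ := hsep {e | ∃ p ∈ A, c e = p.1 ∨ c e = p.2} (by
      rintro e ⟨p, hp, he⟩
      obtain ⟨a, rfl⟩ := hform p (hAP hp)
      rcases he with he | he
      · exact ⟨_, hp, Or.inr (by rw [hc he])⟩
      · exact ⟨_, hp, Or.inl (by rw [hc he, hσ])⟩)
    refine ⟨d, fun p hp ↦ ?_, fun x hx hxA ↦ ?_, hd⟩
    · obtain ⟨a, rfl⟩ := hform p (hAP hp)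
      exact ⟨hle _ ⟨_, hp, Or.inl rfl⟩, hle _ ⟨_, hp, Or.inr rfl⟩⟩
    · obtain ⟨e, rfl⟩ := (hcomp' x).1 hx
      exact hbot e fun ⟨p, hp, he⟩ ↦ he.elim (hxA p hp).1 (hxA p hp).2

end Pairings

/-! ### Almost invariant sets and ends -/

section AlmostInvariant

variable {X : Type*} {h : X → X} {A B C D : Set X}

theorem eventuallyLE_cofinite_iff : A ≤ᶠ[cofinite] B ↔ (A \ B).Finite := by
  change (∀ᶠ x in cofinite, x ∈ A → x ∈ B) ↔ _
  simp only [eventually_cofinite, Classical.not_imp]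
  rfl

/-- `D` is almost `h`-invariant if membership in `D` changes along only finitely many steps
`x ↦ h x`; modulo finite sets, these are the fixed sets of the map induced by an injective `h`. -/
def IsAlmostInvariant (h : X → X) (D : Set X) : Prop :=
  h ⁻¹' D =ᶠ[cofinite] D

theorem isAlmostInvariant_congr {g : X → X} (hgh : g =ᶠ[cofinite] h) :
    IsAlmostInvariant g A ↔ IsAlmostInvariant h A := by
  have hpre : g ⁻¹' A =ᶠ[cofinite] h ⁻¹' A := hgh.mono fun x hx ↦ congrArg (· ∈ A) hx
  exact ⟨hpre.symm.trans, hpre.trans⟩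

/-- An end of `h` is an infinite almost invariant set that no almost invariant set splits into two
infinite pieces; modulo finite sets, the ends are the components of the induced automorphism. -/
structure IsEnd (h : X → X) (C : Set X) : Prop where
  infinite : C.Infinite
  isAlmostInvariant : IsAlmostInvariant h C
  finite_or_finite : ∀ D, IsAlmostInvariant h D → (C \ D).Finite ∨ (C ∩ D).Finite

theorem IsEnd.eventuallyEq_of_infinite_inter (hC : IsEnd h C) (hD : IsEnd h D)
    (hCD : (C ∩ D).Infinite) : C =ᶠ[cofinite] D :=
  (eventuallyLE_cofinite_iff.2 ((hC.finite_or_finite D hD.2).resolve_right hCD)).antisymm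
    (eventuallyLE_cofinite_iff.2
      ((hD.finite_or_finite C hC.2).resolve_right (inter_comm C D ▸ hCD)))

theorem exists_subset_infinite_sdiff (hA : A.Infinite) :
    ∃ t ⊆ A, t.Infinite ∧ (A \ t).Infinite := by
  obtain ⟨t, u, rfl, hdisj, hcard⟩ := hA.exists_union_disjoint_cardinal_eq_of_infinite
  have hiff : t.Infinite ↔ u.Infinite := by
    rw [← infinite_coe_iff, ← infinite_coe_iff, Cardinal.infinite_iff, hcard,
      ← Cardinal.infinite_iff]
  have hu : u.Infinite := (infinite_union.1 hA).elim hiff.1 id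
  exact ⟨t, subset_union_left, hiff.2 hu, by rwa [union_sdiff_cancel_left hdisj.le_bot]⟩

theorem IsEnd.exists_infinite_inter_preimage {L : Type*} (hC : IsEnd h C) {ρ : X → L}
    (hρ : ∀ x, ρ (h x) = ρ x) : ∃ q, (C ∩ ρ ⁻¹' {q}).Infinite := by
  -- Otherwise `ρ` takes infinitely many values on `C`, and splitting these values splits `C`.
  by_contra! hfib
  have himage : (ρ '' C).Infinite := fun hfin ↦
    hC.infinite (Finite.of_finite_fibers ρ hfin fun q _ ↦ hfib q)
  obtain ⟨t, htC, ht, hCt⟩ := exists_subset_infinite_sdiff himage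
  have hinv : IsAlmostInvariant h (ρ ⁻¹' t) :=
    EventuallyEq.of_eq (congrArg (· ⁻¹' t) (show ρ ∘ h = ρ from funext hρ))
  rcases hC.finite_or_finite _ hinv with hfin | hfin
  · exact hCt (image_sdiff_preimage ▸ hfin.image ρ)
  · exact ht (by simpa only [image_inter_preimage, inter_eq_self_of_subset_right htC]
      using hfin.image ρ)

theorem IsEnd.exists_infinite_inter_of_invariant (hC : IsEnd h C) {𝓢 : Set (Set X)}
    (hinv : ∀ S ∈ 𝓢, h ⁻¹' S = S) (hcover : ⋃₀ 𝓢 = univ) : ∃ S ∈ 𝓢, (C ∩ S).Infinite := by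
  let ρ : X → Quot fun x y ↦ h x = y := Quot.mk _
  obtain ⟨q, hq⟩ := hC.exists_infinite_inter_preimage (ρ := ρ) fun x ↦
    (Quot.sound (r := fun x y ↦ h x = y) rfl).symm
  obtain ⟨x, rfl⟩ := Quot.exists_rep q
  obtain ⟨S, hS, hxS⟩ := mem_sUnion.1 (hcover ▸ mem_univ x)
  have hlift (a b : X) (hab : h a = b) : (a ∈ S) = (b ∈ S) := by
    rw [← hab, ← mem_preimage (f := h), hinv S hS]
  refine ⟨S, hS, hq.mono (inter_subset_inter_right C fun y hy ↦ ?_)⟩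
  exact (congrArg (Quot.lift (· ∈ S) hlift) hy).mpr hxS

end AlmostInvariant

section Rays

open Function

variable {X : Type*} {h : X → X} {s : ℕ → X} {D : Set X}

/-- `s` enumerates, without repetition, a half-infinite piece of an orbit of `h`, which `h`
traverses either away from `s 0` or towards it. -/
structure IsRay (h : X → X) (s : ℕ → X) : Prop where
  injective : Injective s
  forward_or_backward : (∀ k, h (s k) = s (k + 1)) ∨ ∀ k, h (s (k + 1)) = s k

theorem IsRay.isAlmostInvariant_range (hh : Injective h) (hs : IsRay h s) :
    IsAlmostInvariant h (range s) := by
  refine eventuallyEq_set.2 ?_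
  rcases hs.forward_or_backward with hstep | hstep
  · filter_upwards [hh.tendsto_cofinite.eventually (eventually_cofinite_ne (s 0))] with x hx
    constructor
    · rintro ⟨_ | k, hk⟩
      · exact absurd hk.symm hx
      · exact ⟨k, hh ((hstep k).trans hk)⟩
    · rintro ⟨k, rfl⟩
      exact ⟨k + 1, (hstep k).symm⟩
  · filter_upwards [eventually_cofinite_ne (s 0)] with x hx
    constructor
    · rintro ⟨k, hk⟩
      exact ⟨k + 1, hh ((hstep k).trans hk)⟩
    · rintro ⟨_ | k, rfl⟩
      · exact absurd rfl hx
      · exact ⟨k, (hstep k).symm⟩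

theorem IsRay.eventuallyConst_mem (hs : IsRay h s) (hD : IsAlmostInvariant h D) :
    EventuallyConst (fun k ↦ s k ∈ D) atTop := by
  have hD' := hs.injective.tendsto_cofinite.eventually (eventuallyEq_set.1 hD)
  rw [Nat.cofinite_eq_atTop] at hD'
  suffices hstep : ∀ᶠ k in atTop, s (k + 1) ∈ D ↔ s k ∈ D by
    rw [eventuallyConst_atTop_nat]
    exact (eventually_atTop.1 hstep).imp fun n hn m hm ↦ propext (hn m hm)
  rcases hs.forward_or_backward with hforward | hbackward
  · filter_upwards [hD'] with k hk
    rwa [← hforward]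
  · filter_upwards [(tendsto_add_atTop_nat 1).eventually hD'] with k hk
    rw [← hk, mem_preimage, hbackward]

theorem IsRay.isEnd_range (hh : Injective h) (hs : IsRay h s) : IsEnd h (range s) where
  infinite := infinite_range_of_injective hs.injective
  isAlmostInvariant := hs.isAlmostInvariant_range hh
  finite_or_finite D hD := by
    have hconst := eventuallyConst_pred.1 (hs.eventuallyConst_mem hD)
    rw [← Nat.cofinite_eq_atTop, eventually_cofinite, eventually_cofinite] at hconst
    refine hconst.imp (fun hfin ↦ (hfin.image s).subset ?_) fun hfin ↦ (hfin.image s).subset ?_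
    · rintro _ ⟨⟨k, rfl⟩, hk⟩
      exact ⟨k, hk, rfl⟩
    · rintro _ ⟨⟨k, rfl⟩, hk⟩
      exact ⟨k, not_not_intro hk, rfl⟩

end Rays

/-! ### Orbits of an injective map -/

section Orbits

open Function

universe u

variable {X : Type u} {h : X → X}

/-- A parametrization of the two-sided infinite orbits of `h`: the points `pt i n`, `n : ℤ`, run
through the orbit with index `i`. The other points are periodic or descend from a point outside
the range of `h`. -/
structure TwoSidedOrbits (h : X → X) where
  ι : Type u
  pt : ι → ℤ → X
  map_pt : ∀ i n, h (pt i n) = pt i (n + 1)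
  injective : Injective (uncurry pt)
  cover : ∀ x, x ∈ periodicPts h ∨ (∃ i n, pt i n = x) ∨ ∃ r ∉ range h, ∃ k, h^[k] r = x

theorem zpow_apply_injective_of_notMem_periodicPts {g : Equiv.Perm X} {x : X}
    (hx : x ∉ periodicPts g) : Injective fun n : ℤ ↦ (g ^ n) x := by
  intro m n hmn
  have hfix : (g ^ (-m + n)) x = x := by
    rw [zpow_add, Equiv.Perm.mul_apply, ← show (g ^ m) x = (g ^ n) x from hmn,
      ← Equiv.Perm.mul_apply, ← zpow_add, neg_add_cancel, zpow_zero, Equiv.Perm.one_apply]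
  have hdvd := (MulAction.zpow_smul_eq_iff_period_dvd (g := g) (a := x)).1 hfix
  have hzero : MulAction.period g x = 0 := minimalPeriod_eq_zero_iff_notMem_periodicPts.2 hx
  rw [hzero, Nat.cast_zero, zero_dvd_iff] at hdvd
  lia

theorem exists_orbit_representatives (g : Equiv.Perm X) :
    ∃ B : Set X, Injective (uncurry fun (b : B) (n : ℤ) ↦ (g ^ n) (b : X)) ∧
      ∀ x, x ∈ periodicPts g ∨ ∃ (b : B) (n : ℤ), (g ^ n) (b : X) = x := by
  let rep (x : X) : X := (Quotient.mk (Equiv.Perm.SameCycle.setoid g) x).out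
  have hrep (x : X) : g.SameCycle (rep x) x :=
    Quotient.mk_out (s := Equiv.Perm.SameCycle.setoid g) x
  have hrep_eq {x y : X} (hxy : g.SameCycle x y) : rep x = rep y :=
    congrArg Quotient.out (Quotient.sound (s := Equiv.Perm.SameCycle.setoid g) hxy)
  refine ⟨{x | x ∉ periodicPts g ∧ rep x = x}, ?_, fun x ↦ or_iff_not_imp_left.2 fun hx ↦ ?_⟩
  · rintro ⟨⟨x, hx, hx'⟩, m⟩ ⟨⟨y, hy, hy'⟩, n⟩ (hxy : (g ^ m) x = (g ^ n) y)
    have hsame : g.SameCycle x y :=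
      Equiv.Perm.sameCycle_zpow_left.1 (Equiv.Perm.sameCycle_zpow_right.1 ⟨0, hxy⟩)
    obtain rfl : x = y := by rw [← hx', ← hy', hrep_eq hsame]
    obtain rfl : m = n := zpow_apply_injective_of_notMem_periodicPts hx hxy
    rfl
  · obtain ⟨n, hn⟩ := hrep x
    have hcomm : Semiconj (g ^ n : Equiv.Perm X) g g :=
      DFunLike.congr_fun ((Commute.refl g).zpow_left n)
    refine ⟨⟨rep x, fun hper ↦ hx ?_, hrep_eq (hrep x)⟩, n, hn⟩
    exact hn ▸ hcomm.mapsTo_periodicPts hper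

theorem exists_iterate_eq_of_notMem_range_iterate {x : X} {n : ℕ} (hx : x ∉ range h^[n]) :
    ∃ r ∉ range h, ∃ k, h^[k] r = x := by
  induction n generalizing x with
  | zero => exact absurd ⟨x, rfl⟩ hx
  | succ n ih =>
    by_cases hxh : x ∈ range h
    · obtain ⟨y, rfl⟩ := hxh
      have hy : y ∉ range h^[n] := by
        rintro ⟨z, rfl⟩
        exact hx ⟨z, iterate_succ_apply' h n z⟩
      obtain ⟨r, hr, k, rfl⟩ := ih hy
      exact ⟨r, hr, k + 1, iterate_succ_apply' h k r⟩
    · exact ⟨x, hxh, 0, rfl⟩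

theorem finite_forwardOrbit {x : X} (hx : x ∈ periodicPts h) :
    (range fun k ↦ h^[k] x).Finite := by
  refine ((finite_Iio (minimalPeriod h x)).image fun k ↦ h^[k] x).subset ?_
  rintro _ ⟨k, rfl⟩
  exact ⟨_, Nat.mod_lt k (minimalPeriod_pos_of_mem_periodicPts hx), iterate_mod_minimalPeriod_eq⟩

theorem preimage_forwardOrbit (hh : Injective h) {x : X} (hx : x ∈ periodicPts h) :
    h ⁻¹' (range fun k ↦ h^[k] x) = range fun k ↦ h^[k] x := by
  ext y
  constructor
  · rintro ⟨k, hk : h^[k] x = h y⟩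
    obtain ⟨p, hp, hper⟩ := hx
    refine ⟨k + (p - 1), hh ((iterate_succ_apply' h _ x).symm.trans ?_)⟩
    rw [show (k + (p - 1)).succ = k + p by lia, iterate_add_apply, hper.eq, hk]
  · rintro ⟨k, rfl⟩
    exact ⟨k + 1, iterate_succ_apply' h k x⟩

theorem eq_and_eq_of_iterate_eq_iterate (hh : Injective h) {x y : X} (hx : x ∉ range h)
    (hy : y ∉ range h) {k l : ℕ} (hxy : h^[k] x = h^[l] y) : k = l ∧ x = y := by
  induction k generalizing l with
  | zero =>
    cases l with
    | zero => exact ⟨rfl, hxy⟩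
    | succ l => exact absurd ⟨_, (iterate_succ_apply' h l y).symm.trans hxy.symm⟩ hx
  | succ k ih =>
    cases l with
    | zero => exact absurd ⟨_, (iterate_succ_apply' h k x).symm.trans hxy⟩ hy
    | succ l =>
      rw [iterate_succ_apply', iterate_succ_apply'] at hxy
      exact (ih (hh hxy)).imp_left (congrArg (· + 1))

theorem bijOn_iInter_range_iterate (hh : Injective h) :
    BijOn h (⋂ n, range h^[n]) (⋂ n, range h^[n]) := by
  simp only [BijOn, hh.injOn, true_and]
  refine ⟨fun x hx ↦ mem_iInter.2 fun n ↦ ?_, fun x hx ↦ ?_⟩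
  · obtain ⟨y, rfl⟩ := mem_iInter.1 hx n
    exact ⟨h y, (iterate_succ_apply h n y).symm.trans (iterate_succ_apply' h n y)⟩
  · obtain ⟨y, rfl⟩ := mem_iInter.1 hx 1
    refine ⟨y, mem_iInter.2 fun n ↦ ?_, rfl⟩
    obtain ⟨z, hz⟩ := mem_iInter.1 hx (n + 1)
    exact ⟨z, hh ((iterate_succ_apply' h n z).symm.trans hz)⟩

theorem nonempty_twoSidedOrbits (hh : Injective h) : Nonempty (TwoSidedOrbits h) := by
  let g : Equiv.Perm ↥(⋂ n, range h^[n]) := BijOn.equiv h (bijOn_iInter_range_iterate hh)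
  have hg (x) : (g x : X) = h x := rfl
  obtain ⟨B, hB, hcover⟩ := exists_orbit_representatives g
  refine ⟨⟨B, fun b n ↦ ((g ^ n) b : _), fun b n ↦ ?_, Subtype.val_injective.comp hB, fun x ↦ ?_⟩⟩
  · rw [← hg, add_comm, zpow_add, zpow_one, Equiv.Perm.mul_apply]
  · by_cases hx : x ∈ ⋂ n, range h^[n]
    · have hsemi : Semiconj Subtype.val g h := hg
      rcases hcover ⟨x, hx⟩ with hper | ⟨b, n, hbn⟩
      · exact Or.inl (hsemi.mapsTo_periodicPts hper)
      · exact Or.inr (Or.inl ⟨b, n, congrArg Subtype.val hbn⟩)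
    · obtain ⟨n, hn⟩ := not_forall.1 (mem_iInter.not.1 hx)
      exact Or.inr (Or.inr (exists_iterate_eq_of_notMem_range_iterate hn))

namespace TwoSidedOrbits

variable (S : TwoSidedOrbits h)

theorem iterate_pt (i : S.ι) (n : ℤ) (k : ℕ) : h^[k] (S.pt i n) = S.pt i (n + k) := by
  induction k with
  | zero => simp
  | succ k ih => rw [iterate_succ_apply', ih, S.map_pt, Nat.cast_succ, add_assoc]

/-- The index type of the rays of `h`: two for every two-sided orbit, one for every point outside
the range of `h`. -/
abbrev RayIndex : Type u := S.ι × Bool ⊕ ↥(range h)ᶜ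

/-- The ray with the given index: one of the two halves of a two-sided orbit, or the whole forward
orbit of a point outside the range of `h`. -/
def ray : S.RayIndex → ℕ → X
  | .inl (i, b), k => S.pt i (bif b then (k : ℤ) else Int.negSucc k)
  | .inr r, k => h^[k] r

/-- The ray forming the other half of the same two-sided orbit; a one-sided orbit consists of a
single ray, which is its own opposite. -/
def opposite : S.RayIndex → S.RayIndex :=
  Sum.map (Prod.map id not) id

/-- The infinite orbit that contains a given ray. -/
def orbit (e : S.RayIndex) : Set X :=
  range (S.ray e) ∪ range (S.ray (S.opposite e))

theorem opposite_involutive : Involutive S.opposite := by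
  rintro (⟨i, _ | _⟩ | r) <;> rfl

theorem fixedPoints_opposite : fixedPoints S.opposite = range Sum.inr := by
  ext (⟨i, _ | _⟩ | r) <;> simp [opposite, IsFixedPt]

theorem ncard_fixedPoints_opposite : (fixedPoints S.opposite).ncard = (range h)ᶜ.ncard := by
  rw [S.fixedPoints_opposite, ← image_univ, ncard_image_of_injective _ Sum.inr_injective,
    ncard_univ, Nat.card_coe_set_eq]

theorem orbit_inl (i : S.ι) (b : Bool) : S.orbit (.inl (i, b)) = range (S.pt i) := by
  have hsplit : range (S.pt i) =
      range (S.ray (.inl (i, true))) ∪ range (S.ray (.inl (i, false))) := by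
    ext x
    constructor
    · rintro ⟨k | k, rfl⟩
      exacts [Or.inl ⟨k, rfl⟩, Or.inr ⟨k, rfl⟩]
    · rintro (⟨k, rfl⟩ | ⟨k, rfl⟩)
      exacts [⟨_, rfl⟩, ⟨_, rfl⟩]
  cases b
  · exact (union_comm _ _).trans hsplit.symm
  · exact hsplit.symm

theorem orbit_inr (r : ↥(range h)ᶜ) : S.orbit (.inr r) = range fun k ↦ h^[k] r :=
  union_self _

theorem pt_ne_iterate (hh : Injective h) (i : S.ι) (n : ℤ) {r : X} (hr : r ∉ range h) (k : ℕ) :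
    S.pt i n ≠ h^[k] r := by
  intro hn
  have hk : h^[k] (S.pt i (n - k)) = h^[k] r := by rw [iterate_pt, sub_add_cancel, hn]
  exact hr ⟨S.pt i (n - k - 1), by rw [S.map_pt, sub_add_cancel, hh.iterate k hk]⟩

theorem ray_injective (hh : Injective h) : Injective (uncurry S.ray) := by
  rintro ⟨⟨i, b⟩ | r, k⟩ ⟨⟨j, b'⟩ | r', l⟩ hkl
  · obtain ⟨rfl, hmn⟩ := Prod.mk.inj (S.injective (a₁ := (i, _)) (a₂ := (j, _)) hkl)
    obtain ⟨rfl, rfl⟩ : b = b' ∧ k = l := by cases b <;> cases b' <;> simp_all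
    rfl
  · exact absurd hkl (S.pt_ne_iterate hh _ _ r'.2 _)
  · exact absurd hkl.symm (S.pt_ne_iterate hh _ _ r.2 _)
  · obtain ⟨rfl, hr⟩ := eq_and_eq_of_iterate_eq_iterate hh r.2 r'.2 hkl
    rw [Subtype.ext hr]

theorem disjoint_range_ray (hh : Injective h) {e e' : S.RayIndex} (hne : e ≠ e') :
    Disjoint (range (S.ray e)) (range (S.ray e')) := by
  refine disjoint_left.2 ?_
  rintro _ ⟨k, rfl⟩ ⟨l, hl⟩
  exact hne (congrArg Prod.fst (S.ray_injective hh (a₁ := (e', l)) (a₂ := (e, k)) hl)).symm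

theorem preimage_orbit (hh : Injective h) (e : S.RayIndex) : h ⁻¹' S.orbit e = S.orbit e := by
  rcases e with ⟨i, b⟩ | r
  · rw [orbit_inl]
    ext x
    constructor
    · rintro ⟨n, hn⟩
      exact ⟨n - 1, hh (by rw [S.map_pt, sub_add_cancel, hn])⟩
    · rintro ⟨n, rfl⟩
      exact ⟨n + 1, (S.map_pt i n).symm⟩
  · rw [orbit_inr]
    ext x
    constructor
    · rintro ⟨_ | k, hk⟩
      · exact absurd ⟨x, hk.symm⟩ r.2
      · exact ⟨k, hh ((iterate_succ_apply' h k r).symm.trans hk)⟩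
    · rintro ⟨k, rfl⟩
      exact ⟨k + 1, iterate_succ_apply' h k r⟩

theorem isRay_ray (hh : Injective h) (e : S.RayIndex) : IsRay h (S.ray e) where
  injective k l hkl :=
    congrArg Prod.snd (S.ray_injective hh (a₁ := (e, k)) (a₂ := (e, l)) hkl)
  forward_or_backward := by
    rcases e with ⟨i, _ | _⟩ | r
    · refine Or.inr fun k ↦ (S.map_pt i _).trans (congrArg (S.pt i) ?_)
      lia
    · exact Or.inl fun k ↦ S.map_pt i k
    · exact Or.inl fun k ↦ (iterate_succ_apply' h k r).symm

theorem isEnd_range_ray (hh : Injective h) (e : S.RayIndex) : IsEnd h (range (S.ray e)) :=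
  (S.isRay_ray hh e).isEnd_range hh

theorem exists_ray_of_isEnd (hh : Injective h) {C : Set X} (hC : IsEnd h C) :
    ∃ e, C =ᶠ[cofinite] range (S.ray e) := by
  suffices hray : ∃ e, (C ∩ range (S.ray e)).Infinite by
    exact hray.imp fun e he ↦ hC.eventuallyEq_of_infinite_inter (S.isEnd_range_ray hh e) he
  let 𝓢 : Set (Set X) := {U | h ⁻¹' U = U ∧ U.Finite} ∪ range S.orbit
  have hinv : ∀ U ∈ 𝓢, h ⁻¹' U = U := by
    rintro _ (⟨hU, -⟩ | ⟨e, rfl⟩)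
    exacts [hU, S.preimage_orbit hh e]
  have hcover : ⋃₀ 𝓢 = univ := by
    refine eq_univ_of_forall fun x ↦ ?_
    rcases S.cover x with hx | ⟨i, n, rfl⟩ | ⟨r, hr, k, rfl⟩
    · exact ⟨_, Or.inl ⟨preimage_forwardOrbit hh hx, finite_forwardOrbit hx⟩, 0, rfl⟩
    · exact ⟨_, Or.inr ⟨.inl (i, true), S.orbit_inl i true⟩, n, rfl⟩
    · exact ⟨_, Or.inr ⟨.inr ⟨r, hr⟩, S.orbit_inr _⟩, k, rfl⟩
  obtain ⟨U, ⟨-, hfin⟩ | ⟨e, rfl⟩, hU⟩ := hC.exists_infinite_inter_of_invariant hinv hcover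
  · exact absurd (hfin.subset inter_subset_right) hU
  · rw [orbit, inter_union_distrib_left, infinite_union] at hU
    exact hU.elim (fun h ↦ ⟨_, h⟩) fun h ↦ ⟨_, h⟩

theorem finite_cut_pt {D : Set X} (hD : IsAlmostInvariant h D) :
    {i | ∃ m n, S.pt i m ∈ D ∧ S.pt i n ∉ D}.Finite := by
  have hbad : {x | ¬(h x ∈ D ↔ x ∈ D)}.Finite := eventually_cofinite.1 (eventuallyEq_set.1 hD)
  refine ((hbad.preimage S.injective.injOn).image Prod.fst).subset ?_
  rintro i ⟨m, n, hm, hn⟩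
  by_contra hi
  have hstep (k : ℤ) : S.pt i (k + 1) ∈ D ↔ S.pt i k ∈ D := by
    by_contra hk
    exact hi ⟨(i, k), by rwa [mem_preimage, mem_ofPred_eq, uncurry_apply_pair, S.map_pt], rfl⟩
  have hper : Periodic (fun k ↦ S.pt i k ∈ D) 1 := fun k ↦ propext (hstep k)
  have hconst (k : ℤ) : (S.pt i k ∈ D) = (S.pt i 0 ∈ D) := by
    simpa only [Int.cast_id, mul_one] using hper.int_mul_eq k
  rw [hconst, ← hconst m] at hn
  exact hn hm

theorem finite_cut_opposite (hh : Injective h) {D : Set X} {A : Set S.RayIndex}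
    (hD : IsAlmostInvariant h D) (hsub : ∀ e ∈ A, (range (S.ray e) \ D).Finite)
    (hdisj : ∀ e ∉ A, (range (S.ray e) ∩ D).Finite) : {e ∈ A | S.opposite e ∉ A}.Finite := by
  refine (((S.finite_cut_pt hD).prod (finite_univ (α := Bool))).image Sum.inl).subset ?_
  rintro (⟨i, b⟩ | r) ⟨he, he'⟩
  · obtain ⟨x, hx, hxD⟩ := ((S.isEnd_range_ray hh _).infinite.sdiff (hsub _ he)).nonempty
    obtain ⟨y, hy, hyD⟩ := ((S.isEnd_range_ray hh _).infinite.sdiff (hdisj _ he')).nonempty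
    obtain ⟨m, rfl⟩ : x ∈ range (S.pt i) := S.orbit_inl i b ▸ mem_union_left _ hx
    obtain ⟨n, rfl⟩ : y ∈ range (S.pt i) := S.orbit_inl i b ▸ mem_union_right _ hy
    refine ⟨(i, b), ⟨⟨m, n, ?_, fun hn ↦ hyD ⟨hy, hn⟩⟩, mem_univ b⟩, rfl⟩
    exact by_contra fun hm ↦ hxD ⟨hx, hm⟩
  · exact absurd he he'

theorem exists_invariant_separating (hh : Injective h) {A : Set S.RayIndex}
    (hA : MapsTo S.opposite A A) : ∃ D : Set X, h ⁻¹' D = D ∧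
      (∀ e ∈ A, range (S.ray e) ⊆ D) ∧ ∀ e ∉ A, Disjoint (range (S.ray e)) D := by
  refine ⟨⋃ e ∈ A, S.orbit e, ?_, fun e he ↦ ?_, fun e he ↦ ?_⟩
  · simp only [preimage_iUnion, S.preimage_orbit hh]
  · exact subset_union_left.trans (subset_biUnion_of_mem (u := S.orbit) he)
  · simp only [disjoint_iUnion_right, orbit, disjoint_union_right]
    exact fun e' he' ↦ ⟨S.disjoint_range_ray hh (by rintro rfl; exact he he'),
      S.disjoint_range_ray hh (by rintro rfl; exact he (hA he'))⟩

end TwoSidedOrbits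

end Orbits

/-! ### Components of an automorphism of `P(ℕ)/Fin` -/

section PFin

open Function

variable {A B C D : Set ℕ}

theorem pfinMk_surjective : Surjective pfinMk :=
  Quotient.mk_surjective

theorem pfinMk_eq_pfinMk : pfinMk A = pfinMk B ↔ A =ᶠ[cofinite] B :=
  Germ.coe_eq

theorem pfinMk_le_pfinMk : pfinMk A ≤ pfinMk B ↔ (A \ B).Finite :=
  eventuallyLE_cofinite_iff

theorem pfinMk_eq_bot : pfinMk A = ⊥ ↔ A.Finite := by
  rw [← le_bot_iff, show (⊥ : PFin) = pfinMk ∅ from rfl, pfinMk_le_pfinMk, sdiff_empty]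

theorem pfinMk_inter : pfinMk (A ∩ B) = pfinMk A ⊓ pfinMk B := rfl

theorem pfinMk_inf_eq_bot : pfinMk A ⊓ pfinMk B = ⊥ ↔ (A ∩ B).Finite := by
  rw [← pfinMk_inter, pfinMk_eq_bot]

variable {α : PFin → PFin} {h : ℕ → ℕ}

theorem isComponent_pfinMk_iff (hα : ∀ A, α (pfinMk A) = pfinMk A ↔ IsAlmostInvariant h A) :
    IsComponent α (pfinMk C) ↔ IsEnd h C := by
  constructor
  · rintro ⟨hfix, hbot, hmin⟩
    refine ⟨mt pfinMk_eq_bot.2 hbot, (hα C).1 hfix, fun D hD ↦ or_iff_not_imp_right.2 fun hCD ↦ ?_⟩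
    have hfixCD : α (pfinMk (C ∩ D)) = pfinMk (C ∩ D) := (hα _).2 (((hα C).1 hfix).inter hD)
    have hle : pfinMk (C ∩ D) ≤ pfinMk C := pfinMk_inter.trans_le inf_le_left
    have hnlt : ¬pfinMk (C ∩ D) < pfinMk C := fun hlt ↦
      hmin _ (bot_lt_iff_ne_bot.2 (mt pfinMk_eq_bot.1 hCD)) hlt hfixCD
    have hge := pfinMk_le_pfinMk.1 (not_lt_iff_le_imp_ge.1 hnlt hle)
    rwa [sdiff_self_inter] at hge
  · rintro ⟨hinf, hC, hsplit⟩
    refine ⟨(hα C).2 hC, mt pfinMk_eq_bot.1 hinf, fun x hx hxC hfix ↦ ?_⟩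
    obtain ⟨D, rfl⟩ := pfinMk_surjective x
    rcases hsplit D ((hα D).1 hfix) with hCD | hCD
    · exact hxC.not_ge (pfinMk_le_pfinMk.2 hCD)
    · rw [← pfinMk_inf_eq_bot, inf_eq_right.2 hxC.le] at hCD
      exact hx.ne' hCD

theorem isSeparated_pfinMk_iff {E : Type*} {C : E → Set ℕ} {A : Set E}
    (hα : ∀ A, α (pfinMk A) = pfinMk A ↔ IsAlmostInvariant h A) :
    IsSeparated α (fun e ↦ pfinMk (C e)) A ↔ ∃ D, IsAlmostInvariant h D ∧
      (∀ e ∈ A, (C e \ D).Finite) ∧ ∀ e ∉ A, (C e ∩ D).Finite := by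
  rw [IsSeparated, pfinMk_surjective.exists]
  refine exists_congr fun D ↦ ?_
  simp only [hα, pfinMk_le_pfinMk, pfinMk_inf_eq_bot]
  tauto

theorem TwoSidedOrbits.pfinMk_range_ray_injective (S : TwoSidedOrbits h) (hh : Injective h) :
    Injective fun e ↦ pfinMk (range (S.ray e)) := by
  intro e e' hee'
  by_contra hne
  have hfin := pfinMk_le_pfinMk.1 (le_of_eq hee')
  rw [(S.disjoint_range_ray hh hne).sdiff_eq_left] at hfin
  exact (S.isEnd_range_ray hh e).infinite hfin

theorem TwoSidedOrbits.setOf_isComponent (S : TwoSidedOrbits h) (hh : Injective h)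
    (hα : ∀ A, α (pfinMk A) = pfinMk A ↔ IsAlmostInvariant h A) :
    {x | IsComponent α x} = range fun e ↦ pfinMk (range (S.ray e)) := by
  ext x
  obtain ⟨C, rfl⟩ := pfinMk_surjective x
  rw [mem_ofPred_eq, isComponent_pfinMk_iff hα]
  constructor
  · intro hC
    obtain ⟨e, he⟩ := S.exists_ray_of_isEnd hh hC
    exact ⟨e, (pfinMk_eq_pfinMk.2 he).symm⟩
  · rintro ⟨e, he⟩
    rw [← isComponent_pfinMk_iff hα, ← he, isComponent_pfinMk_iff hα]
    exact S.isEnd_range_ray hh e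

theorem even_ncard_compl_range_of_propertyStar (hh : Injective h)
    (hfin : (range h)ᶜ.Finite) (hα : ∀ A, α (pfinMk A) = pfinMk A ↔ IsAlmostInvariant h A)
    (hstar : PropertyStar α) : Even (range h)ᶜ.ncard := by
  obtain ⟨S⟩ := nonempty_twoSidedOrbits hh
  obtain ⟨σ, hσ, hne, hsep⟩ := (propertyStar_iff_exists_involutive
    (S.pfinMk_range_ray_injective hh) (S.setOf_isComponent hh hα)).1 hstar
  have := hfin.to_subtype
  have hfix : (fixedPoints S.opposite).Finite := by
    rw [S.fixedPoints_opposite]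
    exact finite_range _
  have hcut (A : Set S.RayIndex) (hA : MapsTo σ A A) : {e ∈ A | S.opposite e ∉ A}.Finite := by
    obtain ⟨D, hD, hsub, hdisj⟩ := (isSeparated_pfinMk_iff hα).1 (hsep A hA)
    exact S.finite_cut_opposite hh hD hsub hdisj
  rw [← S.ncard_fixedPoints_opposite]
  exact even_ncard_fixedPoints hσ S.opposite_involutive hne
    (finite_ne_of_finite_cut hσ S.opposite_involutive hfix hcut)

theorem propertyStar_of_even_ncard_compl_range (hh : Injective h)
    (hfin : (range h)ᶜ.Finite) (hα : ∀ A, α (pfinMk A) = pfinMk A ↔ IsAlmostInvariant h A)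
    (heven : Even (range h)ᶜ.ncard) : PropertyStar α := by
  obtain ⟨S⟩ := nonempty_twoSidedOrbits hh
  refine (propertyStar_iff_exists_involutive
    (S.pfinMk_range_ray_injective hh) (S.setOf_isComponent hh hα)).2 ?_
  have := hfin.to_subtype
  obtain ⟨s, hs, hs_ne⟩ := exists_involutive_of_even_card
    (X := ↥(range h)ᶜ) (by rwa [Nat.card_coe_set_eq])
  refine ⟨Sum.map (Prod.map id not) s, ?_, ?_, fun A hA ↦ (isSeparated_pfinMk_iff hα).2 ?_⟩
  · rintro (⟨i, _ | _⟩ | r)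
    exacts [rfl, rfl, congrArg Sum.inr (hs r)]
  · rintro (⟨i, _ | _⟩ | r) <;> simp [hs_ne]
  · have hopp : MapsTo S.opposite A A := by
      rintro (⟨i, b⟩ | r) he
      exacts [hA he, he]
    obtain ⟨D, hD, hsub, hdisj⟩ := S.exists_invariant_separating hh hopp
    exact ⟨D, .of_eq hD, fun e he ↦ by simp [sdiff_eq_empty.2 (hsub e he)],
      fun e he ↦ by simp [(hdisj e he).inter_eq]⟩

end PFin

/-! ### Extending an almost permutation to an injection -/

namespace AlmostPerm

variable (f : AlmostPerm) {A : Set ℕ}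

theorem eventually_mem_dom : ∀ᶠ n in cofinite, n ∈ f.dom :=
  f.cofinite_dom

theorem map_toFun_cofinite : map f.toFun cofinite = cofinite := by
  ext s
  constructor <;> intro hs
  · have hs' : (f.toFun ⁻¹' s)ᶜ.Finite := hs
    refine ((hs'.image f.toFun).union f.cofinite_ran).subset fun n hn ↦ or_iff_not_imp_right.2 ?_
    rw [mem_compl_iff, not_not]
    rintro ⟨m, -, rfl⟩
    exact ⟨m, hn, rfl⟩
  · have hinj : (f.toFun ⁻¹' sᶜ ∩ f.dom).Finite :=
      Finite.of_finite_image ((mem_cofinite.1 hs).subset (by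
        rintro _ ⟨n, hn, rfl⟩; exact hn.1)) (f.injOn.mono inter_subset_right)
    refine (hinj.union f.cofinite_dom).subset fun n hn ↦ ?_
    by_cases hd : n ∈ f.dom
    exacts [Or.inl ⟨hn, hd⟩, Or.inr hd]

theorem eventually_cofinite_toFun_iff {p : ℕ → Prop} :
    (∀ᶠ n in cofinite, p (f.toFun n)) ↔ ∀ᶠ n in cofinite, p n := by
  rw [← eventually_map (m := f.toFun) (P := p), f.map_toFun_cofinite]

theorem image_eventuallyEq_iff : f.image A =ᶠ[cofinite] A ↔ IsAlmostInvariant f.toFun A := by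
  rw [eventuallyEq_set, ← f.eventually_cofinite_toFun_iff, IsAlmostInvariant, eventuallyEq_set]
  refine eventually_congr (f.eventually_mem_dom.mono fun n hn ↦ ?_)
  have hmem : f.toFun n ∈ f.image A ↔ n ∈ A := by
    rw [image, f.injOn.mem_image_iff inter_subset_right hn, mem_inter_iff, and_iff_left hn]
  exact (iff_congr hmem Iff.rfl).trans Iff.comm

theorem index_eq_ncard_sub_ncard : f.index = f.domᶜ.ncard - f.ranᶜ.ncard := rfl

/-- The inverse almost permutation. -/
noncomputable def inv : AlmostPerm where
  dom := f.ran
  toFun := Function.invFunOn f.toFun f.dom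
  cofinite_dom := f.cofinite_ran
  injOn := Function.invFunOn_injOn_image f.toFun f.dom
  cofinite_ran := by
    rw [ran, f.injOn.invFunOn_image Subset.rfl]
    exact f.cofinite_dom

theorem index_inv : f.inv.index = -f.index := by
  have hran : f.inv.ran = f.dom := f.injOn.invFunOn_image Subset.rfl
  rw [index_eq_ncard_sub_ncard, index_eq_ncard_sub_ncard, hran, neg_sub]
  rfl

theorem isAlmostInvariant_inv_iff :
    IsAlmostInvariant f.inv.toFun A ↔ IsAlmostInvariant f.toFun A := by
  rw [IsAlmostInvariant, eventuallyEq_set, ← f.eventually_cofinite_toFun_iff, IsAlmostInvariant,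
    eventuallyEq_set]
  refine eventually_congr (f.eventually_mem_dom.mono fun n hn ↦ ?_)
  have hinv : f.inv.toFun (f.toFun n) = n := f.injOn.leftInvOn_invFunOn hn
  rw [mem_preimage, hinv, mem_preimage]
  exact Iff.comm

theorem exists_injective_eventuallyEq (hf : f.index ≤ 0) :
    ∃ h : ℕ → ℕ, Function.Injective h ∧ h =ᶠ[cofinite] f.toFun ∧
      (range h)ᶜ.Finite ∧ ((range h)ᶜ.ncard : ℤ) = -f.index := by
  -- Extend `f` by an injection of the complement of its domain into that of its range.
  classical
  have hran : f.ranᶜ.Finite := f.cofinite_ran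
  rw [index_eq_ncard_sub_ncard] at hf ⊢
  have hcard : f.domᶜ.encard ≤ f.ranᶜ.encard := by
    rw [← f.cofinite_dom.cast_ncard_eq, ← hran.cast_ncard_eq, Nat.cast_le]
    lia
  obtain ⟨g, hg_maps, hg_inj⟩ := f.cofinite_dom.exists_injOn_of_encard_le hcard
  have hg_sub : g '' f.domᶜ ⊆ f.ranᶜ := image_subset_iff.2 hg_maps
  have hrange : (range (f.dom.piecewise f.toFun g))ᶜ = f.ranᶜ \ g '' f.domᶜ := by
    rw [range_piecewise, compl_union]
    rfl
  refine ⟨f.dom.piecewise f.toFun g, (injective_piecewise_iff f.dom).2 ⟨f.injOn, hg_inj, ?_⟩,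
    ?_, ?_, ?_⟩
  · exact fun m hm n hn hmn ↦ hg_maps hn ⟨m, hm, hmn⟩
  · exact f.eventually_mem_dom.mono fun n hn ↦ piecewise_eq_of_mem _ _ _ hn
  · exact hrange ▸ hran.sdiff
  · have hsum := ncard_sdiff_add_ncard_of_subset hg_sub hran
    rw [hg_inj.ncard_image] at hsum
    rw [hrange]
    lia

theorem exists_injective :
    ∃ h : ℕ → ℕ, Function.Injective h ∧ (range h)ᶜ.Finite ∧ ((range h)ᶜ.ncard : ℤ) = |f.index| ∧
      ∀ A, f.image A =ᶠ[cofinite] A ↔ IsAlmostInvariant h A := by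
  simp only [image_eventuallyEq_iff]
  rcases le_total f.index 0 with hf | hf
  · obtain ⟨h, hinj, heq, hfin, hcard⟩ := f.exists_injective_eventuallyEq hf
    exact ⟨h, hinj, hfin, by rw [hcard, abs_of_nonpos hf],
      fun A ↦ (isAlmostInvariant_congr heq).symm⟩
  · obtain ⟨h, hinj, heq, hfin, hcard⟩ :=
      f.inv.exists_injective_eventuallyEq (by rw [index_inv]; lia)
    exact ⟨h, hinj, hfin, by rw [hcard, index_inv, neg_neg, abs_of_nonneg hf],
      fun A ↦ by rw [isAlmostInvariant_congr heq, isAlmostInvariant_inv_iff]⟩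

end AlmostPerm

/-- `α_f` satisfies property (*) iff `Index f` is even. -/
theorem propertyStar_iff_index_even (f : AlmostPerm) (α : PFin → PFin)
    (hα : ∀ A : Set ℕ, α (pfinMk A) = pfinMk (f.image A)) :
    PropertyStar α ↔ f.index % 2 = 0 := by
  obtain ⟨h, hinj, hfin, hcard, hfixed⟩ := f.exists_injective
  have hα' (A : Set ℕ) : α (pfinMk A) = pfinMk A ↔ IsAlmostInvariant h A := by
    rw [hα, pfinMk_eq_pfinMk, hfixed]
  calc PropertyStar α ↔ Even (range h)ᶜ.ncard :=
        ⟨even_ncard_compl_range_of_propertyStar hinj hfin hα',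
          propertyStar_of_even_ncard_compl_range hinj hfin hα'⟩
    _ ↔ Even f.index := by rw [← Int.even_coe_nat, hcard, even_abs]
    _ ↔ f.index % 2 = 0 := Int.even_iff
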